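/- arXiv:2005.13011 — 5 statements merged into one kernel-verified Lean document; each statement's English description precedes it below -/
import Mathlib

section
/- (Theorem 2, property 2, for f̂) The acceptance rate of the bidirectional acceptance sampling for the target density f̂ equals 1/M*: P(E⁻₁ ∪ E⁺) = 1/M*. -/
open MeasureTheory ProbabilityTheory Set

theorem stmt3
    (μ : Measure ℝ) [SigmaFinite μ]
    (h g fhat : ℝ → ℝ)
    (hmeas_h : Measurable h) (hmeas_g : Measurable g) (hmeas_f : Measurable fhat)
    (h_nonneg : ∀ x, 0 ≤ h x) (g_nonneg : ∀ x, 0 ≤ g x) (f_nonneg : ∀ x, 0 ≤ fhat x)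
    (h_int : ∫ x, h x ∂μ = 1) (g_int : ∫ x, g x ∂μ = 1) (f_int : ∫ x, fhat x ∂μ = 1)
    (h_pos : ∀ x, 0 < g x + fhat x → 0 < h x)
    (Mstar : ℝ) (hM : 0 < Mstar)
    (hMf : ∀ᵐ x ∂μ, fhat x ≤ Mstar * h x)
    (hMg : ∀ᵐ x ∂μ, g x ≤ Mstar * h x)
    (Ω : Type*) [MeasurableSpace Ω] (P : Measure Ω) [IsProbabilityMeasure P]
    (X V : Ω → ℝ) (hX : Measurable X) (hV : Measurable V)
    (hXlaw : Measure.map X P = μ.withDensity (fun x => ENNReal.ofReal (h x)))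
    (hVlaw : Measure.map V P = volume.restrict (Set.Icc (0:ℝ) 1))
    (hXV : IndepFun X V P) :
    (P ({ω | fhat (X ω) < g (X ω) ∧ V ω * Mstar ≤ fhat (X ω) / h (X ω)}
        ∪ ({ω | g (X ω) ≤ fhat (X ω) ∧ V ω * Mstar ≤ g (X ω) / h (X ω)}
          ∪ {ω | g (X ω) ≤ fhat (X ω) ∧ g (X ω) / h (X ω) < V ω * Mstar
              ∧ V ω * Mstar ≤ fhat (X ω) / h (X ω)}))).toReal
      = 1 / Mstar := by
  have hset : ({ω | fhat (X ω) < g (X ω) ∧ V ω * Mstar ≤ fhat (X ω) / h (X ω)}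
        ∪ ({ω | g (X ω) ≤ fhat (X ω) ∧ V ω * Mstar ≤ g (X ω) / h (X ω)}
          ∪ {ω | g (X ω) ≤ fhat (X ω) ∧ g (X ω) / h (X ω) < V ω * Mstar
              ∧ V ω * Mstar ≤ fhat (X ω) / h (X ω)}))
      = (fun ω => (X ω, V ω)) ⁻¹' {p : ℝ × ℝ | p.2 * Mstar ≤ fhat p.1 / h p.1} := by
    ext ω
    simp only [mem_union, mem_setOf_eq, mem_preimage]
    constructor
    · rintro (h1 | h1 | h1)
      · exact h1.2
      · exact h1.2.trans (div_le_div_of_nonneg_right h1.1 (h_nonneg _))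
      · exact h1.2.2
    · intro h1
      rcases lt_or_ge (fhat (X ω)) (g (X ω)) with h2 | h2
      · exact Or.inl ⟨h2, h1⟩
      · rcases le_or_gt (V ω * Mstar) (g (X ω) / h (X ω)) with h3 | h3
        · exact Or.inr (Or.inl ⟨h2, h3⟩)
        · exact Or.inr (Or.inr ⟨h2, h3, h1⟩)
  have hS : MeasurableSet {p : ℝ × ℝ | p.2 * Mstar ≤ fhat p.1 / h p.1} := by
    apply measurableSet_le
    · fun_prop
    · exact (hmeas_f.comp measurable_fst).div (hmeas_h.comp measurable_fst)
  have hf_int : Integrable fhat μ := by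
    by_contra hc
    rw [integral_undef hc] at f_int
    exact zero_ne_one f_int
  have hprod := (indepFun_iff_map_prod_eq_prod_map_map hX.aemeasurable hV.aemeasurable).1 hXV
  rw [hset, ← Measure.map_apply (hX.prodMk hV) hS, hprod, Measure.prod_apply hS, hXlaw, hVlaw,
    lintegral_withDensity_eq_lintegral_mul _ hmeas_h.ennreal_ofReal
      (measurable_measure_prodMk_left hS)]
  have key : ∫⁻ x, ((fun x => ENNReal.ofReal (h x)) * fun x =>
      (volume.restrict (Set.Icc (0:ℝ) 1)) (Prod.mk x ⁻¹' {p : ℝ × ℝ | p.2 * Mstar ≤ fhat p.1 / h p.1})) x ∂μ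
      = ∫⁻ x, ENNReal.ofReal (fhat x / Mstar) ∂μ := by
    apply lintegral_congr_ae
    filter_upwards [hMf] with x hx
    simp only [Pi.mul_apply]
    rcases (h_nonneg x).eq_or_lt with h0 | h0
    · have : fhat x = 0 := by
        rw [← h0] at hx
        exact le_antisymm (by simpa using hx) (f_nonneg x)
      simp [← h0, this]
    · have hle : fhat x / h x / Mstar ≤ 1 := by
        rw [div_div, div_le_one (by positivity)]
        linarith
      have he : (Prod.mk x ⁻¹' {p : ℝ × ℝ | p.2 * Mstar ≤ fhat p.1 / h p.1}) ∩ Set.Icc (0:ℝ) 1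
          = Set.Icc 0 (fhat x / h x / Mstar) := by
        ext v
        simp only [mem_inter_iff, mem_preimage, mem_setOf_eq, mem_Icc, ← le_div_iff₀ hM]
        constructor
        · rintro ⟨a, b, c⟩
          exact ⟨b, a⟩
        · rintro ⟨a, b⟩
          exact ⟨b, a, b.trans hle⟩
      rw [Measure.restrict_apply' measurableSet_Icc, he, Real.volume_Icc,
        ← ENNReal.ofReal_mul h0.le]
      congr 1
      field_simp
      simp
  rw [key, ← ofReal_integral_eq_lintegral_ofReal (hf_int.div_const _)
    (Filter.Eventually.of_forall fun x => div_nonneg (f_nonneg x) hM.le), integral_div, f_int,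
    ENNReal.toReal_ofReal (by positivity)]
end

section
/- (Theorem 2, property 2, for g) The acceptance rate of the bidirectional acceptance sampling for the target density g equals 1/M*: P(E⁺₁ ∪ E⁻) = 1/M*. -/
open MeasureTheory ProbabilityTheory Set

theorem stmt4
    (μ : Measure ℝ) [SigmaFinite μ]
    (h g fhat : ℝ → ℝ)
    (hmeas_h : Measurable h) (hmeas_g : Measurable g) (hmeas_f : Measurable fhat)
    (h_nonneg : ∀ x, 0 ≤ h x) (g_nonneg : ∀ x, 0 ≤ g x) (f_nonneg : ∀ x, 0 ≤ fhat x)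
    (h_int : ∫ x, h x ∂μ = 1) (g_int : ∫ x, g x ∂μ = 1) (f_int : ∫ x, fhat x ∂μ = 1)
    (h_pos : ∀ x, 0 < g x + fhat x → 0 < h x)
    (Mstar : ℝ) (hM : 0 < Mstar)
    (hMf : ∀ᵐ x ∂μ, fhat x ≤ Mstar * h x)
    (hMg : ∀ᵐ x ∂μ, g x ≤ Mstar * h x)
    (Ω : Type*) [MeasurableSpace Ω] (P : Measure Ω) [IsProbabilityMeasure P]
    (X V : Ω → ℝ) (hX : Measurable X) (hV : Measurable V)
    (hXlaw : Measure.map X P = μ.withDensity (fun x => ENNReal.ofReal (h x)))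
    (hVlaw : Measure.map V P = volume.restrict (Set.Icc (0:ℝ) 1))
    (hXV : IndepFun X V P) :
    (P ({ω | g (X ω) ≤ fhat (X ω) ∧ V ω * Mstar ≤ g (X ω) / h (X ω)}
        ∪ ({ω | fhat (X ω) < g (X ω) ∧ V ω * Mstar ≤ fhat (X ω) / h (X ω)}
          ∪ {ω | fhat (X ω) < g (X ω) ∧ fhat (X ω) / h (X ω) < V ω * Mstar
              ∧ V ω * Mstar ≤ g (X ω) / h (X ω)}))).toReal
      = 1 / Mstar := by
  have hset : ({ω | g (X ω) ≤ fhat (X ω) ∧ V ω * Mstar ≤ g (X ω) / h (X ω)}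
        ∪ ({ω | fhat (X ω) < g (X ω) ∧ V ω * Mstar ≤ fhat (X ω) / h (X ω)}
          ∪ {ω | fhat (X ω) < g (X ω) ∧ fhat (X ω) / h (X ω) < V ω * Mstar
              ∧ V ω * Mstar ≤ g (X ω) / h (X ω)}))
      = (fun ω => (X ω, V ω)) ⁻¹' {p : ℝ × ℝ | p.2 * Mstar ≤ g p.1 / h p.1} := by
    ext ω
    simp only [mem_union, mem_setOf_eq, mem_preimage]
    constructor
    · rintro (⟨_, h2⟩ | ⟨h1, h2⟩ | ⟨_, _, h2⟩)
      · exact h2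
      · exact h2.trans (div_le_div_of_nonneg_right h1.le (h_nonneg _))
      · exact h2
    · intro h2
      rcases le_or_gt (g (X ω)) (fhat (X ω)) with h1 | h1
      · exact Or.inl ⟨h1, h2⟩
      · rcases le_or_gt (V ω * Mstar) (fhat (X ω) / h (X ω)) with h3 | h3
        · exact Or.inr (Or.inl ⟨h1, h3⟩)
        · exact Or.inr (Or.inr ⟨h1, h3, h2⟩)
  have hS : MeasurableSet {p : ℝ × ℝ | p.2 * Mstar ≤ g p.1 / h p.1} :=
    measurableSet_le (by fun_prop) (by fun_prop)
  have hprod := (indepFun_iff_map_prod_eq_prod_map_map hX.aemeasurable hV.aemeasurable).1 hXV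
  have g_intble : Integrable g μ := by
    by_contra hc
    rw [integral_undef hc] at g_int
    exact zero_ne_one g_int
  rw [hset, ← Measure.map_apply (hX.prodMk hV) hS, hprod, hXlaw, hVlaw,
    Measure.prod_apply hS, lintegral_withDensity_eq_lintegral_mul _ (by fun_prop)
      (measurable_measure_prodMk_left hS)]
  have hae : ∀ᵐ x ∂μ, ((fun x => ENNReal.ofReal (h x)) * fun x =>
      (volume.restrict (Set.Icc (0:ℝ) 1))
        (Prod.mk x ⁻¹' {p : ℝ × ℝ | p.2 * Mstar ≤ g p.1 / h p.1})) x
      = ENNReal.ofReal (g x / Mstar) := by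
    filter_upwards [hMg] with x hx
    simp only [Pi.mul_apply]
    rcases (h_nonneg x).eq_or_lt with h0 | h0
    · have hg : g x = 0 := by
        rw [← h0] at hx
        linarith [g_nonneg x]
      simp [← h0, hg]
    · have hle : g x / h x / Mstar ≤ 1 := by
        rw [div_div, div_le_one (by positivity)]
        linarith
      have hE : (Prod.mk x ⁻¹' {p : ℝ × ℝ | p.2 * Mstar ≤ g p.1 / h p.1}) ∩ Set.Icc (0:ℝ) 1
          = Set.Icc 0 (g x / h x / Mstar) := by
        ext v
        simp only [mem_inter_iff, mem_preimage, mem_setOf_eq, mem_Icc]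
        rw [← le_div_iff₀ hM]
        constructor
        · rintro ⟨a, b, c⟩
          exact ⟨b, a⟩
        · rintro ⟨a, b⟩
          exact ⟨b, a, b.trans hle⟩
      rw [Measure.restrict_apply' measurableSet_Icc, hE, Real.volume_Icc, sub_zero,
        ← ENNReal.ofReal_mul h0.le]
      congr 1
      field_simp
  rw [lintegral_congr_ae hae, ← integral_eq_lintegral_of_nonneg_ae
    (Filter.Eventually.of_forall fun x => div_nonneg (g_nonneg x) hM.le)
    (by fun_prop), integral_div, g_int]
end

section
/- (Theorem 2, property 1, for f̂) Conditional on the acceptance event E⁻₁ ∪ E⁺, the accepted observation is distributed according to the density f̂: for every x ∈ ℝ, P(X ≤ x | E⁻₁ ∪ E⁺) = ∫_{(-∞, x]} f̂ dμ. -/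
open MeasureTheory ProbabilityTheory Set

theorem stmt5
    (μ : Measure ℝ) [SigmaFinite μ]
    (h g fhat : ℝ → ℝ)
    (hmeas_h : Measurable h) (hmeas_g : Measurable g) (hmeas_f : Measurable fhat)
    (h_nonneg : ∀ x, 0 ≤ h x) (g_nonneg : ∀ x, 0 ≤ g x) (f_nonneg : ∀ x, 0 ≤ fhat x)
    (h_int : ∫ x, h x ∂μ = 1) (g_int : ∫ x, g x ∂μ = 1) (f_int : ∫ x, fhat x ∂μ = 1)
    (h_pos : ∀ x, 0 < g x + fhat x → 0 < h x)
    (Mstar : ℝ) (hM : 0 < Mstar)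
    (hMf : ∀ᵐ x ∂μ, fhat x ≤ Mstar * h x)
    (hMg : ∀ᵐ x ∂μ, g x ≤ Mstar * h x)
    (Ω : Type*) [MeasurableSpace Ω] (P : Measure Ω) [IsProbabilityMeasure P]
    (X V : Ω → ℝ) (hX : Measurable X) (hV : Measurable V)
    (hXlaw : Measure.map X P = μ.withDensity (fun x => ENNReal.ofReal (h x)))
    (hVlaw : Measure.map V P = volume.restrict (Set.Icc (0:ℝ) 1))
    (hXV : IndepFun X V P) :
    ∀ x : ℝ,
      ((P[|{ω | fhat (X ω) < g (X ω) ∧ V ω * Mstar ≤ fhat (X ω) / h (X ω)}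
          ∪ ({ω | g (X ω) ≤ fhat (X ω) ∧ V ω * Mstar ≤ g (X ω) / h (X ω)}
            ∪ {ω | g (X ω) ≤ fhat (X ω) ∧ g (X ω) / h (X ω) < V ω * Mstar
                ∧ V ω * Mstar ≤ fhat (X ω) / h (X ω)})]) {ω | X ω ≤ x}).toReal
        = ∫ t in Set.Iic x, fhat t ∂μ := by
  have hset : ({ω | fhat (X ω) < g (X ω) ∧ V ω * Mstar ≤ fhat (X ω) / h (X ω)}
          ∪ ({ω | g (X ω) ≤ fhat (X ω) ∧ V ω * Mstar ≤ g (X ω) / h (X ω)}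
            ∪ {ω | g (X ω) ≤ fhat (X ω) ∧ g (X ω) / h (X ω) < V ω * Mstar
                ∧ V ω * Mstar ≤ fhat (X ω) / h (X ω)}))
      = {ω | V ω * Mstar ≤ fhat (X ω) / h (X ω)} := by
    ext ω
    simp only [mem_union, mem_setOf_eq]
    constructor
    · rintro (⟨_, h2⟩ | ⟨h1, h2⟩ | ⟨_, _, h2⟩)
      · exact h2
      · exact h2.trans (div_le_div_of_nonneg_right h1 (h_nonneg _))
      · exact h2
    · intro h2
      rcases lt_or_ge (fhat (X ω)) (g (X ω)) with h1 | h1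
      · exact Or.inl ⟨h1, h2⟩
      · rcases le_or_gt (V ω * Mstar) (g (X ω) / h (X ω)) with h3 | h3
        · exact Or.inr (Or.inl ⟨h1, h3⟩)
        · exact Or.inr (Or.inr ⟨h1, h3, h2⟩)
  rw [hset]
  have hEm : MeasurableSet {ω | V ω * Mstar ≤ fhat (X ω) / h (X ω)} :=
    measurableSet_le (hV.mul_const _) ((hmeas_f.comp hX).div (hmeas_h.comp hX))
  have key : ∀ S : Set ℝ, MeasurableSet S →
      P ({ω | V ω * Mstar ≤ fhat (X ω) / h (X ω)} ∩ X ⁻¹' S)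
        = ENNReal.ofReal (1 / Mstar) * ∫⁻ t in S, ENNReal.ofReal (fhat t) ∂μ := by
    intro S hS
    have hprod := (indepFun_iff_map_prod_eq_prod_map_map hX.aemeasurable hV.aemeasurable).1 hXV
    have hBm : MeasurableSet {p : ℝ × ℝ | p.2 * Mstar ≤ fhat p.1 / h p.1 ∧ p.1 ∈ S} := by
      apply MeasurableSet.inter
      · exact measurableSet_le (measurable_snd.mul_const _)
          ((hmeas_f.comp measurable_fst).div (hmeas_h.comp measurable_fst))
      · exact measurable_fst hS
    have h1 : P ({ω | V ω * Mstar ≤ fhat (X ω) / h (X ω)} ∩ X ⁻¹' S)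
        = Measure.map (fun ω => (X ω, V ω)) P
          {p : ℝ × ℝ | p.2 * Mstar ≤ fhat p.1 / h p.1 ∧ p.1 ∈ S} := by
      rw [Measure.map_apply (hX.prodMk hV) hBm]
      rfl
    have hVp : SFinite (Measure.map V P) := inferInstance
    rw [h1, hprod, Measure.prod_apply hBm, hXlaw,
      lintegral_withDensity_eq_lintegral_mul _ hmeas_h.ennreal_ofReal
        (measurable_measure_prodMk_left hBm), hVlaw, ← lintegral_const_mul _ hmeas_f.ennreal_ofReal,
      ← lintegral_indicator hS]
    apply lintegral_congr_ae
    filter_upwards [hMf] with t ht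
    by_cases htS : t ∈ S
    · have hvol : (volume.restrict (Icc (0:ℝ) 1))
          (Prod.mk t ⁻¹' {p : ℝ × ℝ | p.2 * Mstar ≤ fhat p.1 / h p.1 ∧ p.1 ∈ S})
          = ENNReal.ofReal (fhat t / h t / Mstar) := by
        rw [Measure.restrict_apply (measurable_prodMk_left hBm)]
        have hle : fhat t / h t / Mstar ≤ 1 := by
          rw [div_le_one hM]
          exact div_le_of_le_mul₀ (h_nonneg t) hM.le ht
        have : Prod.mk t ⁻¹' {p : ℝ × ℝ | p.2 * Mstar ≤ fhat p.1 / h p.1 ∧ p.1 ∈ S} ∩ Icc 0 1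
            = Icc 0 (fhat t / h t / Mstar) := by
          ext v
          simp only [mem_inter_iff, mem_preimage, mem_setOf_eq, mem_Icc, htS, and_true,
            le_div_iff₀ hM]
          constructor
          · rintro ⟨a, b, c⟩
            exact ⟨b, a⟩
          · rintro ⟨a, b⟩
            exact ⟨b, a, ((le_div_iff₀ hM).2 b).trans hle⟩
        rw [this, Real.volume_Icc, sub_zero]
      rw [indicator_of_mem htS, Pi.mul_apply, hvol, ← ENNReal.ofReal_mul (h_nonneg t),
        ← ENNReal.ofReal_mul (by positivity)]
      congr 1
      rcases (h_nonneg t).eq_or_lt with h0 | h0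
      · have : fhat t = 0 := by
          rw [← h0] at ht
          linarith [f_nonneg t]
        simp [this]
      · field_simp
    · rw [indicator_of_notMem htS, Pi.mul_apply]
      simp [htS]
  have hfi : Integrable fhat μ := by
    by_contra hc
    rw [integral_undef hc] at f_int
    exact zero_ne_one f_int
  have hone : ∫⁻ t, ENNReal.ofReal (fhat t) ∂μ = 1 := by
    rw [← ofReal_integral_eq_lintegral_ofReal hfi (ae_of_all _ f_nonneg), f_int,
      ENNReal.ofReal_one]
  have hE := key univ MeasurableSet.univ
  rw [preimage_univ, inter_univ, Measure.restrict_univ, hone, mul_one] at hE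
  intro x
  have hx : {ω | X ω ≤ x} = X ⁻¹' (Iic x) := rfl
  have hc0 : ENNReal.ofReal (1 / Mstar) ≠ 0 := by
    rw [Ne, ENNReal.ofReal_eq_zero, not_le]
    positivity
  rw [cond_apply hEm, hx, key _ measurableSet_Iic, hE, ← mul_assoc,
    ENNReal.inv_mul_cancel hc0 ENNReal.ofReal_ne_top, one_mul,
    integral_eq_lintegral_of_nonneg_ae (ae_of_all _ f_nonneg) hmeas_f.aestronglyMeasurable]
end

section
/- (Theorem 2, property 1, for g) Conditional on the acceptance event E⁺₁ ∪ E⁻, the accepted observation is distributed according to the density g: for every x ∈ ℝ, P(X ≤ x | E⁺₁ ∪ E⁻) = ∫_{(-∞, x]} g dμ. -/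
open MeasureTheory ProbabilityTheory Set


lemma accept_aux
    (μ : Measure ℝ) [SigmaFinite μ]
    (h g : ℝ → ℝ)
    (hmeas_h : Measurable h) (hmeas_g : Measurable g)
    (h_nonneg : ∀ x, 0 ≤ h x) (g_nonneg : ∀ x, 0 ≤ g x)
    (Mstar : ℝ) (hM : 0 < Mstar)
    (hMg : ∀ᵐ x ∂μ, g x ≤ Mstar * h x)
    (Ω : Type*) [MeasurableSpace Ω] (P : Measure Ω) [IsProbabilityMeasure P]
    (X V : Ω → ℝ) (hX : Measurable X) (hV : Measurable V)
    (hXlaw : Measure.map X P = μ.withDensity (fun x => ENNReal.ofReal (h x)))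
    (hVlaw : Measure.map V P = volume.restrict (Set.Icc (0:ℝ) 1))
    (hXV : IndepFun X V P) (A : Set ℝ) (hA : MeasurableSet A) :
    P ({ω | V ω * Mstar ≤ g (X ω) / h (X ω)} ∩ X ⁻¹' A)
      = ENNReal.ofReal Mstar⁻¹ * ∫⁻ t in A, ENNReal.ofReal (g t) ∂μ := by
  have hS : MeasurableSet {p : ℝ × ℝ | p.2 * Mstar ≤ g p.1 / h p.1} :=
    measurableSet_le (by fun_prop) (by fun_prop)
  have hT : MeasurableSet ({p : ℝ × ℝ | p.2 * Mstar ≤ g p.1 / h p.1} ∩ Prod.fst ⁻¹' A) :=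
    hS.inter (measurable_fst hA)
  have hprod := (indepFun_iff_map_prod_eq_prod_map_map hX.aemeasurable hV.aemeasurable).1 hXV
  have e1 : P ({ω | V ω * Mstar ≤ g (X ω) / h (X ω)} ∩ X ⁻¹' A)
      = (P.map (fun ω => (X ω, V ω)))
        ({p : ℝ × ℝ | p.2 * Mstar ≤ g p.1 / h p.1} ∩ Prod.fst ⁻¹' A) := by
    rw [Measure.map_apply (hX.prodMk hV) hT]
    rfl
  have hvp : IsProbabilityMeasure (P.map V) := Measure.isProbabilityMeasure_map hV.aemeasurable
  rw [e1, hprod, Measure.prod_apply hT, hXlaw,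
    lintegral_withDensity_eq_lintegral_mul _ (by fun_prop) (measurable_measure_prodMk_left hT),
    ← lintegral_const_mul _ (by fun_prop), ← lintegral_indicator hA]
  apply lintegral_congr_ae
  filter_upwards [hMg] with x hx
  by_cases hxA : x ∈ A
  · have e2 : Prod.mk x ⁻¹' ({p : ℝ × ℝ | p.2 * Mstar ≤ g p.1 / h p.1} ∩ Prod.fst ⁻¹' A)
        = Set.Iic (g x / h x / Mstar) := by
      ext v
      simp [hxA, le_div_iff₀ hM]
    simp only [Pi.mul_apply, e2, indicator_of_mem hxA]
    rcases (h_nonneg x).eq_or_lt with h0 | h0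
    · have : g x = 0 := le_antisymm (by simpa [← h0] using hx) (g_nonneg x)
      simp [← h0, this]
    · have hr : g x / h x / Mstar ≤ 1 := by
        rw [div_div, div_le_one (by positivity)]
        linarith
      have e3 : Set.Iic (g x / h x / Mstar) ∩ Set.Icc (0:ℝ) 1 = Set.Icc 0 (g x / h x / Mstar) := by
        ext v
        simp only [mem_inter_iff, mem_Iic, mem_Icc]
        constructor
        · rintro ⟨a, b, c⟩
          exact ⟨b, a⟩
        · rintro ⟨a, b⟩
          exact ⟨b, a, b.trans hr⟩
      rw [hVlaw, Measure.restrict_apply measurableSet_Iic, e3, Real.volume_Icc,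
        ← ENNReal.ofReal_mul h0.le, ← ENNReal.ofReal_mul (by positivity)]
      congr 1
      field_simp
      ring
  · have e2 : Prod.mk x ⁻¹' ({p : ℝ × ℝ | p.2 * Mstar ≤ g p.1 / h p.1} ∩ Prod.fst ⁻¹' A)
        = ∅ := by
      ext v
      simp [hxA]
    simp only [Pi.mul_apply, e2, indicator_of_notMem hxA, measure_empty, mul_zero]

theorem stmt6
    (μ : Measure ℝ) [SigmaFinite μ]
    (h g fhat : ℝ → ℝ)
    (hmeas_h : Measurable h) (hmeas_g : Measurable g) (hmeas_f : Measurable fhat)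
    (h_nonneg : ∀ x, 0 ≤ h x) (g_nonneg : ∀ x, 0 ≤ g x) (f_nonneg : ∀ x, 0 ≤ fhat x)
    (h_int : ∫ x, h x ∂μ = 1) (g_int : ∫ x, g x ∂μ = 1) (f_int : ∫ x, fhat x ∂μ = 1)
    (h_pos : ∀ x, 0 < g x + fhat x → 0 < h x)
    (Mstar : ℝ) (hM : 0 < Mstar)
    (hMf : ∀ᵐ x ∂μ, fhat x ≤ Mstar * h x)
    (hMg : ∀ᵐ x ∂μ, g x ≤ Mstar * h x)
    (Ω : Type*) [MeasurableSpace Ω] (P : Measure Ω) [IsProbabilityMeasure P]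
    (X V : Ω → ℝ) (hX : Measurable X) (hV : Measurable V)
    (hXlaw : Measure.map X P = μ.withDensity (fun x => ENNReal.ofReal (h x)))
    (hVlaw : Measure.map V P = volume.restrict (Set.Icc (0:ℝ) 1))
    (hXV : IndepFun X V P) :
    ∀ x : ℝ,
      ((P[|{ω | g (X ω) ≤ fhat (X ω) ∧ V ω * Mstar ≤ g (X ω) / h (X ω)}
          ∪ ({ω | fhat (X ω) < g (X ω) ∧ V ω * Mstar ≤ fhat (X ω) / h (X ω)}
            ∪ {ω | fhat (X ω) < g (X ω) ∧ fhat (X ω) / h (X ω) < V ω * Mstar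
                ∧ V ω * Mstar ≤ g (X ω) / h (X ω)})]) {ω | X ω ≤ x}).toReal
        = ∫ t in Set.Iic x, g t ∂μ := by
  intro x
  have hset : ({ω | g (X ω) ≤ fhat (X ω) ∧ V ω * Mstar ≤ g (X ω) / h (X ω)}
          ∪ ({ω | fhat (X ω) < g (X ω) ∧ V ω * Mstar ≤ fhat (X ω) / h (X ω)}
            ∪ {ω | fhat (X ω) < g (X ω) ∧ fhat (X ω) / h (X ω) < V ω * Mstar
                ∧ V ω * Mstar ≤ g (X ω) / h (X ω)}))
      = {ω | V ω * Mstar ≤ g (X ω) / h (X ω)} := by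
    ext ω
    simp only [mem_union, mem_setOf_eq]
    constructor
    · rintro (⟨_, a⟩ | ⟨a, b⟩ | ⟨_, _, a⟩)
      · exact a
      · exact b.trans (div_le_div_of_nonneg_right a.le (h_nonneg _))
      · exact a
    · intro a
      rcases le_or_gt (g (X ω)) (fhat (X ω)) with b | b
      · exact Or.inl ⟨b, a⟩
      · rcases le_or_gt (V ω * Mstar) (fhat (X ω) / h (X ω)) with c | c
        · exact Or.inr (Or.inl ⟨b, c⟩)
        · exact Or.inr (Or.inr ⟨b, c, a⟩)
  have key := accept_aux μ h g hmeas_h hmeas_g h_nonneg g_nonneg Mstar hM hMg Ω P X V hX hV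
    hXlaw hVlaw hXV
  have hE : MeasurableSet {ω | V ω * Mstar ≤ g (X ω) / h (X ω)} :=
    measurableSet_le (by fun_prop) (by fun_prop)
  have gi : Integrable g μ := by
    by_contra hc
    rw [integral_undef hc] at g_int
    exact zero_ne_one g_int
  have k1 := key Set.univ MeasurableSet.univ
  rw [preimage_univ, inter_univ, Measure.restrict_univ,
    ← ofReal_integral_eq_lintegral_ofReal gi (ae_of_all _ g_nonneg), g_int] at k1
  have k2 := key (Set.Iic x) measurableSet_Iic
  rw [← ofReal_integral_eq_lintegral_ofReal gi.integrableOn (ae_of_all _ g_nonneg)] at k2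
  have e : {ω | X ω ≤ x} = X ⁻¹' (Set.Iic x) := rfl
  rw [hset, cond_apply hE, e, k2, k1, ENNReal.toReal_mul, ENNReal.toReal_mul, ENNReal.toReal_inv,
    ENNReal.toReal_mul, ENNReal.toReal_ofReal (by positivity), ENNReal.toReal_ofReal zero_le_one,
    ENNReal.toReal_ofReal (integral_nonneg g_nonneg)]
  field_simp
end

section
/- (Moments of the mid-distribution transform) If X ∼ G, then the random variable G^mid(X) has mean E[G^mid(X)] = 1/2 and variance Var[G^mid(X)] = (1 − Σ_{x ∈ 𝒰} p_G(x)³)/12. -/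
open MeasureTheory

lemma aux_moments (p : ℝ → ℝ) (S : Finset ℝ) :
    (∑ x ∈ S, p x * ((∑ y ∈ S, if y ≤ x then p y else 0) - 0.5 * p x) = (∑ x ∈ S, p x) ^ 2 / 2)
    ∧ (∑ x ∈ S, p x * ((∑ y ∈ S, if y ≤ x then p y else 0) - 0.5 * p x) ^ 2
      = (∑ x ∈ S, p x) ^ 3 / 3 - (∑ x ∈ S, p x ^ 3) / 12) := by
  induction S using Finset.induction_on_max with
  | empty => simp
  | insert a s ha ih =>
    have hn : a ∉ s := fun h => lt_irrefl _ (ha a h)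
    have h1 : ∀ x ∈ s, (∑ y ∈ insert a s, if y ≤ x then p y else 0)
        = ∑ y ∈ s, if y ≤ x then p y else 0 := by
      intro x hx
      rw [Finset.sum_insert hn, if_neg (not_le.2 (ha x hx)), zero_add]
    have h2 : (∑ y ∈ insert a s, if y ≤ a then p y else 0) = p a + ∑ y ∈ s, p y := by
      rw [Finset.sum_insert hn, if_pos le_rfl]
      congr 1
      exact Finset.sum_congr rfl fun y hy => if_pos (ha y hy).le
    constructor
    · rw [Finset.sum_insert hn, h2,
        Finset.sum_congr rfl (g := fun x =>
          p x * ((∑ y ∈ s, if y ≤ x then p y else 0) - 0.5 * p x))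
          (f := fun x => p x * ((∑ y ∈ insert a s, if y ≤ x then p y else 0) - 0.5 * p x))
          (fun x hx => by simp only [h1 x hx]), ih.1, Finset.sum_insert hn]
      ring
    · rw [Finset.sum_insert hn, h2,
        Finset.sum_congr rfl (g := fun x =>
          p x * ((∑ y ∈ s, if y ≤ x then p y else 0) - 0.5 * p x) ^ 2)
          (f := fun x => p x * ((∑ y ∈ insert a s, if y ≤ x then p y else 0) - 0.5 * p x) ^ 2)
          (fun x hx => by simp only [h1 x hx]), ih.2, Finset.sum_insert hn,
        Finset.sum_insert hn]
      ring

lemma aux_integral {Ω : Type*} [MeasurableSpace Ω] (P : Measure Ω) [IsProbabilityMeasure P]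
    (S : Finset ℝ) (X : Ω → ℝ) (hX : Measurable X) (hXmem : ∀ ω, X ω ∈ S)
    (p : ℝ → ℝ) (hp : ∀ x, p x = (P {ω | X ω = x}).toReal) (f : ℝ → ℝ) :
    ∫ ω, f (X ω) ∂P = ∑ x ∈ S, p x * f x := by
  have hm : ∀ x, MeasurableSet {ω | X ω = x} := fun x => hX (measurableSet_singleton x)
  have h : ∀ ω, f (X ω) = ∑ x ∈ S, Set.indicator {ω | X ω = x} (fun _ => f x) ω := by
    intro ω
    simp [Set.indicator_apply, hXmem ω]
  simp_rw [h]
  rw [integral_finsetSum _ fun x _ => (integrable_const (f x)).indicator (hm x)]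
  refine Finset.sum_congr rfl fun x _ => ?_
  rw [integral_indicator_const _ (hm x), hp, smul_eq_mul]
  rfl

/-- Moments of the mid-distribution transform: if `X ~ G`, then
`E[G^mid(X)] = 1/2` and `Var[G^mid(X)] = (1 − Σ_{x ∈ 𝒰} p_G(x)³)/12`. -/
theorem stmt16
    (Ω : Type*) [MeasurableSpace Ω] (P : Measure Ω) [IsProbabilityMeasure P]
    (𝒰 : Finset ℝ) (X : Ω → ℝ) (hX : Measurable X)
    (hXmem : ∀ ω, X ω ∈ 𝒰)
    (p : ℝ → ℝ) (hp : ∀ x, p x = (P {ω | X ω = x}).toReal)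
    (G : ℝ → ℝ) (hG : ∀ x, G x = (P {ω | X ω ≤ x}).toReal)
    (Gmid : ℝ → ℝ) (hGmid : ∀ x, Gmid x = G x - 0.5 * p x) :
    (∫ ω, Gmid (X ω) ∂P = 1 / 2)
    ∧ ∫ ω, (Gmid (X ω) - ∫ ω', Gmid (X ω') ∂P) ^ 2 ∂P
        = (1 - ∑ x ∈ 𝒰, (p x) ^ 3) / 12 := by
  have key := aux_integral P 𝒰 X hX hXmem p hp
  have hT : ∑ x ∈ 𝒰, p x = 1 := by
    have := key (fun _ => 1)
    simpa using this.symm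
  have hF : ∀ x, G x = ∑ y ∈ 𝒰, if y ≤ x then p y else 0 := by
    intro x
    have h := key (Set.indicator (Set.Iic x) (fun _ => 1))
    have h2 : ∫ ω, Set.indicator (Set.Iic x) (fun _ => (1 : ℝ)) (X ω) ∂P = G x := by
      have h3 := integral_indicator_const (μ := P) (1 : ℝ)
        (show MeasurableSet {ω | X ω ≤ x} from hX measurableSet_Iic)
      rw [smul_eq_mul, mul_one] at h3
      rw [hG]
      exact h3
    rw [← h2, h]
    simp [Set.indicator_apply]
  obtain ⟨m1, m2⟩ := aux_moments p 𝒰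
  simp_rw [← hF, ← hGmid, hT] at m1 m2
  have hmean : ∫ ω, Gmid (X ω) ∂P = 1 / 2 := by
    rw [key Gmid, m1]; norm_num
  refine ⟨hmean, ?_⟩
  rw [hmean, key (fun x => (Gmid x - 1 / 2) ^ 2)]
  have : ∀ x, p x * (Gmid x - 1 / 2) ^ 2 = p x * Gmid x ^ 2 - p x * Gmid x + p x * (1 / 4) := by
    intro x; ring
  simp_rw [this]
  rw [Finset.sum_add_distrib, Finset.sum_sub_distrib, ← Finset.sum_mul, m1, m2, hT]
  ring
end
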